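/- Let A = ∏_{i=1}^r Mat_{n_i}(K_i) with K_i finite field extensions of a number field K, let M be a maximal O_K-order in A with O_C = M ∩ C, and let 𝔤 be a proper full ideal of O_C. Then the canonical map f₁ : SL(M) → SL(M/𝔤M) is surjective, where SL(M) is the kernel of the reduced norm nr : M^× → O_C^× and SL(M/𝔤M) is the kernel of the induced map n̄r : (M/𝔤M)^× → (O_C/𝔤)^×. -/

import Mathlib

open NumberField

set_option synthInstance.maxHeartbeats 1000000
set_option maxHeartbeats 1000000

/-!
By maximality, an order `M` of `∏ Mat_{m_i}(F_i)` is the product of its projections, which are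
maximal orders over the integral closures `O_i` of the base ring, and each of these is the full
stabilizer of an `O_i`-lattice `P_i ⊆ F_i ^ m_i`. Likewise `𝔤` splits into nonzero ideals `J_i` of
`O_i`, and it suffices to treat one factor, with `O`, `P` and `J`.

Since `O / J` is semilocal, `P / JP` is free over it, and Nakayama's lemma yields a basis `e` of the
ambient space and a `c ≡ 1` modulo `J` with `cP ⊆ ⨁ O e_i ⊆ P`. In this basis `c w` is a matrix over
`O` which modulo `J` reduces to `w` and has determinant `1`. As `O / J` has stable rank one, this
reduction is a product of transvections. The entry of a transvection modulo `J` can be lifted to a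
multiple of `c`, and the resulting transvection and its inverse stabilize `P`.
-/

open Module Matrix

section Elementary

/-- The commutative ring `T` has stable rank one in the sense of Bass: every unimodular pair
can be shortened. -/
def HasStableRankOne (T : Type*) [CommSemiring T] : Prop :=
  ∀ ⦃a b : T⦄, IsCoprime a b → ∃ t, IsUnit (a + t * b)

theorem hasStableRankOne_of_finite_maximalSpectrum (T : Type*) [CommRing T]
    [Finite (MaximalSpectrum T)] : HasStableRankOne T := by
  classical
  intro a b hab
  obtain ⟨t, ht⟩ := Ideal.exists_forall_sub_mem_ideal
    (I := fun m : MaximalSpectrum T ↦ m.asIdeal)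
    (fun m m' hne ↦ by
      have := m.isMaximal
      have := m'.isMaximal
      exact Ideal.isCoprime_of_isMaximal fun h ↦ hne (MaximalSpectrum.ext h))
    (fun m ↦ if a ∈ m.asIdeal then 1 else 0)
  refine ⟨t, by_contra fun hu ↦ ?_⟩
  obtain ⟨m, hm, hmem⟩ := exists_max_ideal_of_mem_nonunits hu
  have htm := ht ⟨m, hm⟩
  dsimp only at htm
  split_ifs at htm with ha
  · have htb : t * b ∈ m := (m.add_mem_iff_right ha).1 hmem
    have hb : b ∈ m := (m.sub_mem_iff_right htb).1 (by simpa [sub_mul] using m.mul_mem_right b htm)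
    obtain ⟨x, y, hxy⟩ := hab
    exact hm.ne_top ((Ideal.eq_top_iff_one m).2
      (hxy ▸ m.add_mem (m.mul_mem_left x ha) (m.mul_mem_left y hb)))
  · rw [sub_zero] at htm
    exact ha ((m.add_mem_iff_left (m.mul_mem_right b htm)).1 hmem)

variable {n T : Type*} [Fintype n] [DecidableEq n] [CommRing T]

variable (n T) in
/-- The elementary subgroup `E_n(T)` of `SL_n(T)`, generated by the transvections. -/
def elementarySubgroup : Subgroup (Matrix.SpecialLinearGroup n T) :=
  Subgroup.closure {g | ∃ (i j : n) (hij : i ≠ j) (b : T),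
    g = Matrix.SpecialLinearGroup.transvection hij b}

/-- The subgroup of `SL_n(T)` of the matrices whose columns outside `s` are those of `1`. -/
def fixingStdBasisOutside (T : Type*) [CommRing T] (s : Finset n) :
    Subgroup (Matrix.SpecialLinearGroup n T) :=
  fixingSubgroup _ ((fun l ↦ (Pi.single l 1 : n → T)) '' {l | l ∉ s})

theorem mem_fixingStdBasisOutside {s : Finset n} {A : Matrix.SpecialLinearGroup n T} :
    A ∈ fixingStdBasisOutside T s ↔ ∀ l ∉ s, ∀ i, A i l = (1 : Matrix n n T) i l := by
  simp only [fixingStdBasisOutside, mem_fixingSubgroup_iff, Set.forall_mem_image,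
    Set.mem_ofPred_eq, Matrix.SpecialLinearGroup.smul_def, smul_eq_mulVec, mulVec_single_one,
    funext_iff, col_apply, one_eq_pi_single, Pi.single_comm]

theorem fixingStdBasisOutside_mono : Monotone (fixingStdBasisOutside T (n := n)) :=
  fun _ _ h _ hA ↦ mem_fixingStdBasisOutside.2 fun l hl ↦
    mem_fixingStdBasisOutside.1 hA l fun hl' ↦ hl (h hl')

theorem transvection_mem_elementarySubgroup {i j : n} (hij : i ≠ j) (b : T) :
    .transvection hij b ∈ elementarySubgroup n T :=
  Subgroup.subset_closure ⟨i, j, hij, b, rfl⟩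

theorem transvection_mem_fixingStdBasisOutside {s : Finset n} {i j : n} (hij : i ≠ j) (b : T)
    (hj : j ∈ s) : .transvection hij b ∈ fixingStdBasisOutside T s := by
  refine mem_fixingStdBasisOutside.2 fun l hl k ↦ ?_
  have hjl : j ≠ l := fun h ↦ hl (h ▸ hj)
  simp [Matrix.SpecialLinearGroup.transvection_coe, single_apply_of_col_ne _ _ hjl]

theorem transvection_mul_apply {i j : n} (hij : i ≠ j) (b : T)
    (A : Matrix.SpecialLinearGroup n T) (k l : n) :
    (.transvection hij b * A : Matrix.SpecialLinearGroup n T) k l =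
      A k l + if k = i then b * A j l else 0 := by
  split_ifs with hk
  · exact hk ▸ transvection_mul_apply_same i j l b A.1
  · exact (transvection_mul_apply_of_ne i j k l hk b A.1).trans (add_zero _).symm

theorem exists_elementary_add_rows {j : n} {s : Finset n} (hj : j ∉ s) (b : n → T) :
    ∃ X ∈ elementarySubgroup n T ⊓ fixingStdBasisOutside T s,
      ∀ (A : Matrix.SpecialLinearGroup n T) (i l : n),
        (X * A) i l = A i l + if i = j then ∑ k ∈ s, b k * A k l else 0 := by
  induction s using Finset.induction with
  | empty => exact ⟨1, one_mem _, by simp⟩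
  | insert k s hk ih =>
    obtain ⟨X, ⟨hXe, hXs⟩, hX⟩ := ih fun h ↦ hj (Finset.mem_insert_of_mem h)
    have hjk : j ≠ k := fun h ↦ hj (h ▸ Finset.mem_insert_self k s)
    refine ⟨.transvection hjk (b k) * X,
      ⟨mul_mem (transvection_mem_elementarySubgroup hjk _) hXe,
        mul_mem (transvection_mem_fixingStdBasisOutside hjk _ (Finset.mem_insert_self k s))
          (fixingStdBasisOutside_mono (Finset.subset_insert k s) hXs)⟩, fun A i l ↦ ?_⟩
    rw [mul_assoc, transvection_mul_apply, hX, hX, if_neg hjk.symm, Finset.sum_insert hk]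
    split_ifs <;> ring

theorem exists_elementary_add_row {j : n} {s : Finset n} (hj : j ∉ s) (b : n → T) :
    ∃ X ∈ elementarySubgroup n T, ∀ (A : Matrix.SpecialLinearGroup n T) (i l : n),
      (X * A) i l = A i l + if i ∈ s then b i * A j l else 0 := by
  induction s using Finset.induction with
  | empty => exact ⟨1, one_mem _, by simp⟩
  | insert k s hk ih =>
    have hjs : j ∉ s := fun h ↦ hj (Finset.mem_insert_of_mem h)
    have hkj : k ≠ j := fun h ↦ hj (h ▸ Finset.mem_insert_self k s)
    obtain ⟨X, hXe, hX⟩ := ih hjs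
    refine ⟨.transvection hkj (b k) * X, mul_mem (transvection_mem_elementarySubgroup hkj _) hXe,
      fun A i l ↦ ?_⟩
    rw [mul_assoc, transvection_mul_apply, hX, hX, if_neg hjs]
    by_cases hik : i = k
    · subst hik
      simp [hk]
    · simp [hik]

theorem mem_sup_of_pivot_eq_one {s : Finset n} {j : n} {A : Matrix.SpecialLinearGroup n T}
    (hA : A ∈ fixingStdBasisOutside T (insert j s)) (hjj : A j j = 1) :
    A ∈ elementarySubgroup n T ⊔ fixingStdBasisOutside T s := by
  obtain ⟨X, hXe, hX⟩ := exists_elementary_add_row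
    (Finset.notMem_erase j Finset.univ) (fun i ↦ -A i j)
  rw [← Subgroup.mul_mem_cancel_left _ (Subgroup.mem_sup_left hXe)]
  refine Subgroup.mem_sup_right (mem_fixingStdBasisOutside.2 fun l hl i ↦ ?_)
  rw [hX]
  by_cases hlj : l = j
  · subst hlj
    by_cases hi : i = l
    · subst hi
      simp [hjj]
    · simp [hi, hjj]
  · have hcol := mem_fixingStdBasisOutside.1 hA l (by simp [hlj, hl])
    rw [hcol, hcol, one_apply_ne (Ne.symm hlj)]
    simp

theorem isCoprime_pivot {s : Finset n} {j : n} (hj : j ∉ s) {A : Matrix.SpecialLinearGroup n T}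
    (hA : A ∈ fixingStdBasisOutside T (insert j s)) :
    IsCoprime (A j j) (∑ k ∈ s, A⁻¹ j k * A k j) := by
  have hinv := mem_fixingStdBasisOutside.1 (inv_mem hA)
  have hrow : ∑ k, A⁻¹ j k * A k j = 1 := by
    rw [← mul_apply, ← Matrix.SpecialLinearGroup.coe_mul, inv_mul_cancel,
      Matrix.SpecialLinearGroup.coe_one, one_apply_eq]
  rw [← Finset.sum_subset (Finset.subset_univ (insert j s)) fun k _ hk ↦ by
    rw [hinv k hk, one_apply_ne (by rintro rfl; exact hk (Finset.mem_insert_self j s)), zero_mul],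
    Finset.sum_insert hj] at hrow
  exact ⟨A⁻¹ j j, 1, by rw [one_mul, hrow]⟩

theorem pivot_eq_one_of_mem_singleton {j : n} {A : Matrix.SpecialLinearGroup n T}
    (hA : A ∈ fixingStdBasisOutside T {j}) : A j j = 1 := by
  have hupdate : A.1 = (1 : Matrix n n T).updateCol j fun i ↦ A i j := by
    ext i l
    by_cases hl : l = j
    · rw [hl, updateCol_self]
    · rw [updateCol_ne hl]
      exact mem_fixingStdBasisOutside.1 hA l (by simpa using hl) i
  simpa [← hupdate, A.2] using (cramer_apply (1 : Matrix n n T) (fun i ↦ A i j) j)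

theorem mem_sup_of_isUnit_pivot {s : Finset n} {j k : n} (hj : j ∉ s) (hk : k ∈ s)
    {A : Matrix.SpecialLinearGroup n T} (hA : A ∈ fixingStdBasisOutside T (insert j s))
    (hu : IsUnit (A j j)) : A ∈ elementarySubgroup n T ⊔ fixingStdBasisOutside T s := by
  have hkj : k ≠ j := fun h ↦ hj (h ▸ hk)
  obtain ⟨u, hu⟩ := hu
  have hX := transvection_mem_elementarySubgroup hkj (↑u⁻¹ * (1 - A k j))
  have hY := transvection_mem_elementarySubgroup hkj.symm (1 - A j j)
  rw [← Subgroup.mul_mem_cancel_left _ (Subgroup.mem_sup_left hX),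
    ← Subgroup.mul_mem_cancel_left _ (Subgroup.mem_sup_left hY)]
  refine mem_sup_of_pivot_eq_one (j := j) ?_ ?_
  · exact mul_mem (transvection_mem_fixingStdBasisOutside _ _ (Finset.mem_insert_of_mem hk))
      (mul_mem (transvection_mem_fixingStdBasisOutside _ _ (Finset.mem_insert_self j s)) hA)
  · simp only [transvection_mul_apply, if_pos, if_neg hkj.symm, ← hu]
    linear_combination (1 - (u : T)) * (1 - A k j) * u.inv_mul

theorem fixingStdBasisOutside_insert_le (hT : HasStableRankOne T) {s : Finset n} {j : n}
    (hj : j ∉ s) : fixingStdBasisOutside T (insert j s) ≤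
      elementarySubgroup n T ⊔ fixingStdBasisOutside T s := by
  intro A hA
  obtain rfl | ⟨k, hk⟩ := s.eq_empty_or_nonempty
  · exact mem_sup_of_pivot_eq_one hA (pivot_eq_one_of_mem_singleton hA)
  obtain ⟨t, ht⟩ := hT (isCoprime_pivot hj hA)
  obtain ⟨X, ⟨hXe, hXs⟩, hX⟩ := exists_elementary_add_rows hj (fun k ↦ t * A⁻¹ j k)
  rw [← Subgroup.mul_mem_cancel_left _ (Subgroup.mem_sup_left hXe)]
  refine mem_sup_of_isUnit_pivot hj hk
    (mul_mem (fixingStdBasisOutside_mono (Finset.subset_insert j s) hXs) hA) ?_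
  simpa only [hX, if_pos, Finset.mul_sum, mul_assoc] using ht

theorem elementarySubgroup_eq_top (hT : HasStableRankOne T) : elementarySubgroup n T = ⊤ := by
  have hle : ∀ s : Finset n, fixingStdBasisOutside T s ≤ elementarySubgroup n T := by
    intro s
    induction s using Finset.induction with
    | empty =>
      intro A hA
      have hA1 : A = 1 := Matrix.SpecialLinearGroup.ext _ _ fun i l ↦
        mem_fixingStdBasisOutside.1 hA l (Finset.notMem_empty l) i
      exact hA1 ▸ one_mem _
    | insert j s hj ih =>
      exact (fixingStdBasisOutside_insert_le hT hj).trans (sup_le le_rfl ih)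
  exact eq_top_iff.2 fun A _ ↦ hle Finset.univ
    (mem_fixingStdBasisOutside.2 fun l hl ↦ absurd (Finset.mem_univ l) hl)

variable {O : Type*} [CommRing O]

theorem exists_mem_map_eq_of_forall_transvection (hT : HasStableRankOne T) (f : O →+* T)
    (Γ : Subgroup (Matrix.SpecialLinearGroup n O))
    (hΓ : ∀ (i j : n) (hij : i ≠ j) (t : T), ∃ b, f b = t ∧ .transvection hij b ∈ Γ)
    (A : Matrix.SpecialLinearGroup n T) : ∃ B ∈ Γ, Matrix.SpecialLinearGroup.map f B = A := by
  have htop : Γ.map (Matrix.SpecialLinearGroup.map f) = ⊤ := by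
    rw [eq_top_iff, ← elementarySubgroup_eq_top hT, elementarySubgroup, Subgroup.closure_le]
    rintro _ ⟨i, j, hij, t, rfl⟩
    obtain ⟨b, rfl, hb⟩ := hΓ i j hij t
    refine ⟨_, hb, Matrix.SpecialLinearGroup.ext _ _ fun k l ↦ ?_⟩
    simp [Matrix.SpecialLinearGroup.transvection_coe, single_apply, one_apply, apply_ite f]
  exact htop.ge (Subgroup.mem_top A)

end Elementary

open scoped Pointwise TensorProduct

section AlmostBasis

theorem finite_maximalSpectrum_quotient {O : Type*} [CommRing O] [IsNoetherianRing O]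
    [Ring.DimensionLEOne O] {I : Ideal O} (hI : I ≠ ⊥) : Finite (MaximalSpectrum (O ⧸ I)) := by
  have : Ring.KrullDimLE 0 (O ⧸ I) :=
    Ideal.krullDimLE_zero_quotient_iff_forall_minimalPrimes_isMaximal.2 fun p hp ↦
      hp.1.1.isMaximal (ne_bot_of_le_ne_bot hI hp.1.2)
  have : IsArtinianRing (O ⧸ I) := isArtinianRing_iff_krullDimLE_zero.2 this
  infer_instance

variable {O P : Type*} [CommRing O] [IsDomain O] [AddCommGroup P] [Module O P]
  [Module.Finite O P] [Module.Flat O P]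

theorem finrank_baseChange_of_finite_of_flat (k : Type*) [Field k] [Algebra O k] :
    finrank k (k ⊗[O] P) = finrank O P := by
  rw [← Ideal.finrank_fiber_eq_finrank (M := P) ((⊥ : Ideal k).comap (algebraMap O k)),
    Ideal.finrank_fiber_eq_rankAtStalk]
  exact (congrFun (rankAtStalk_eq_finrank_of_free (R := k) (M := k ⊗[O] P)) ⊥).symm.trans
    (rankAtStalk_baseChange _)

theorem nonempty_basis_quotient_tensor (I : Ideal O) [Finite (MaximalSpectrum (O ⧸ I))] :
    Nonempty (Basis (Fin (finrank O P)) (O ⧸ I) ((O ⧸ I) ⊗[O] P)) := by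
  refine nonempty_basis_of_flat_of_finrank_eq _ _ _ fun m ↦ ?_
  let := Ideal.Quotient.field m.asIdeal
  rw [(TensorProduct.AlgebraTensorModule.cancelBaseChange O (O ⧸ I) ((O ⧸ I) ⧸ m.asIdeal)
    ((O ⧸ I) ⧸ m.asIdeal) P).finrank_eq, finrank_baseChange_of_finite_of_flat]

theorem ker_tensorProduct_mk_quotient_one {O P : Type*} [CommRing O] [AddCommGroup P] [Module O P]
    (I : Ideal O) : LinearMap.ker (TensorProduct.mk O (O ⧸ I) P 1) = I • (⊤ : Submodule O P) := by
  ext p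
  rw [LinearMap.mem_ker, TensorProduct.mk_apply,
    ← (TensorProduct.quotTensorEquivQuotSMul P I).map_eq_zero_iff,
    TensorProduct.quotTensorEquivQuotSMul_mk_one_tmul, Submodule.Quotient.mk_eq_zero]

theorem exists_fin_finrank_span_sup_eq_top (I : Ideal O) [Finite (MaximalSpectrum (O ⧸ I))] :
    ∃ e : Fin (finrank O P) → P, Submodule.span O (Set.range e) ⊔ I • (⊤ : Submodule O P) = ⊤ := by
  obtain ⟨b⟩ := nonempty_basis_quotient_tensor (P := P) I
  choose e he using fun i ↦
    TensorProduct.mk_surjective O P (O ⧸ I) Ideal.Quotient.mk_surjective (b i)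
  have hspan : Submodule.span O (Set.range b) = ⊤ := by
    rw [← Submodule.restrictScalars_span O (O ⧸ I) Ideal.Quotient.mk_surjective, b.span_eq,
      Submodule.restrictScalars_top]
  refine ⟨e, ?_⟩
  rw [← ker_tensorProduct_mk_quotient_one, ← Submodule.comap_map_eq, Submodule.map_span,
    ← Set.range_comp, show TensorProduct.mk O (O ⧸ I) P 1 ∘ e = b from funext he, hspan,
    Submodule.comap_top]

theorem exists_fin_finrank_smul_mem_span (I : Ideal O) [Finite (MaximalSpectrum (O ⧸ I))] :
    ∃ (e : Fin (finrank O P) → P) (c : O), c - 1 ∈ I ∧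
      ∀ p, c • p ∈ Submodule.span O (Set.range e) := by
  obtain ⟨e, he⟩ := exists_fin_finrank_span_sup_eq_top (P := P) I
  obtain ⟨c, hcI, hc⟩ := Submodule.exists_sub_one_mem_and_smul_le_of_fg_of_le_sup
    Module.Finite.fg_top le_top he.ge
  exact ⟨e, c, hcI, fun p ↦ hc (Submodule.smul_mem_pointwise_smul p c ⊤ trivial)⟩

end AlmostBasis

section Lattice

variable {O F V : Type*} [CommRing O] [Field F] [Algebra O F]
  [IsFractionRing O F] [AddCommGroup V] [Module F V] [FiniteDimensional F V] [Module O V]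
  [IsScalarTower O F V]

theorem finrank_le_of_isFractionRing (P : Submodule O V) :
    finrank O P ≤ finrank F V := by
  refine Cardinal.toNat_le_toNat ?_ (Module.rank_lt_aleph0 F V)
  exact (Submodule.rank_le P).trans_eq (IsFractionRing.rank_right_eq O F V).symm

theorem exists_basis_mem_smul_mem_span [IsDedekindDomain O] (P : Submodule O V)
    [Submodule.IsLattice F P] {I : Ideal O} (hI : I ≠ ⊥) (hI' : I ≠ ⊤) :
    ∃ (n : ℕ) (e : Basis (Fin n) F V) (c : O), c - 1 ∈ I ∧ (∀ i, e i ∈ P) ∧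
      ∀ p ∈ P, c • p ∈ Submodule.span O (Set.range e) := by
  have := finite_maximalSpectrum_quotient hI
  have : IsTorsionFree O V := Module.IsTorsionFree.trans_faithfulSMul O F V
  obtain ⟨e, c, hcI, hc⟩ := exists_fin_finrank_smul_mem_span (P := P) I
  have hc0 : algebraMap O F c ≠ 0 := by
    rw [Ne, FaithfulSMul.algebraMap_eq_zero_iff]
    rintro rfl
    exact hI' ((Ideal.eq_top_iff_one I).2 (by simpa using hcI))
  have hcP : ∀ p ∈ P, c • p ∈ Submodule.span O (Set.range fun i ↦ (e i : V)) := fun p hp ↦ by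
    have := Submodule.mem_map_of_mem (f := P.subtype) (hc ⟨p, hp⟩)
    rwa [Submodule.map_span, ← Set.range_comp] at this
  have hspan : ⊤ ≤ Submodule.span F (Set.range fun i ↦ (e i : V)) := by
    rw [← Submodule.IsLattice.span_eq_top (A := F) (M := P), Submodule.span_le]
    intro p hp
    rw [SetLike.mem_coe, ← Submodule.smul_mem_iff _ hc0, algebraMap_smul]
    exact Submodule.span_le_restrictScalars O F _ (hcP p hp)
  have hcard : Fintype.card (Fin (finrank O P)) = finrank F V :=
    ((Fintype.card_fin _).trans_le (finrank_le_of_isFractionRing P)).antisymm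
      (finrank_le_of_span_eq_top (top_le_iff.1 hspan))
  refine ⟨_, basisOfTopLeSpanOfCardEqFinrank _ hspan hcard, c, hcI, ?_, ?_⟩
  · simp
  · simpa using hcP

end Lattice

section LatticeStabilizer

variable {R V : Type*} [CommRing R] [AddCommGroup V] [Module R V]

/-- The order `{a ∈ A | a P ⊆ P}` of the elements of `A` stabilizing the lattice `P`; for `A` the
endomorphism algebra of the ambient space this is `End_R(P)`. -/
def latticeStabilizer (A : Type*) [Ring A] [Algebra R A] [Module A V] [IsScalarTower R A V]
    (P : Submodule R V) : Subalgebra R A where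
  carrier := {a | ∀ p ∈ P, a • p ∈ P}
  mul_mem' ha hb p hp := by
    rw [mul_smul]
    exact ha _ (hb p hp)
  add_mem' ha hb p hp := by
    rw [add_smul]
    exact P.add_mem (ha p hp) (hb p hp)
  algebraMap_mem' r p hp := by
    rw [algebraMap_smul]
    exact P.smul_mem r hp

end LatticeStabilizer

section SingleFactor

variable {O A n : Type*} [CommRing O] [Ring A] [Algebra O A] [Fintype n] [DecidableEq n]

/-- The elements of `SL_n(O)` mapped by `φ` to units of the order `S`. -/
def specialLinearComap (S : Subalgebra O A) (φ : Matrix n n O →ₐ[O] A) :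
    Subgroup (Matrix.SpecialLinearGroup n O) where
  carrier := {g | φ g ∈ S ∧ φ ↑g⁻¹ ∈ S}
  one_mem' := by simp [one_mem]
  mul_mem' {g h} hg hh := by
    simp only [Set.mem_ofPred_eq, _root_.mul_inv_rev, Matrix.SpecialLinearGroup.coe_mul,
      map_mul] at *
    exact ⟨mul_mem hg.1 hh.1, mul_mem hh.2 hg.2⟩
  inv_mem' {g} hg := ⟨hg.2, by rw [inv_inv]; exact hg.1⟩

theorem transvection_mem_specialLinearComap {S : Subalgebra O A} {φ : Matrix n n O →ₐ[O] A} {c : O}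
    (hφ : ∀ X, c • φ X ∈ S) {i j : n} (hij : i ≠ j) (b : O) :
    .transvection hij (c * b) ∈ specialLinearComap S φ := by
  have hmem : ∀ b : O, φ (Matrix.SpecialLinearGroup.transvection hij (c * b)) ∈ S := fun b ↦ by
    rw [Matrix.SpecialLinearGroup.transvection_coe, map_add, map_one, ← smul_eq_mul, ← smul_single,
      map_smul]
    exact add_mem (one_mem S) (hφ _)
  refine ⟨hmem b, ?_⟩
  rw [Matrix.SpecialLinearGroup.transvection_inv, ← mul_neg]
  exact hmem (-b)

theorem smul_map_mem_ideal_smul {S : Subalgebra O A} {φ : Matrix n n O →ₐ[O] A} {c : O}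
    (hφ : ∀ X, c • φ X ∈ S) {I : Ideal O} {X : Matrix n n O} (hX : ∀ i j, X i j ∈ I) :
    c • φ X ∈ I • Subalgebra.toSubmodule S := by
  rw [matrix_eq_sum_single X, map_sum, Finset.smul_sum]
  refine Submodule.sum_mem _ fun i _ ↦ ?_
  rw [map_sum, Finset.smul_sum]
  refine Submodule.sum_mem _ fun j _ ↦ ?_
  rw [← mul_one (X i j), ← smul_eq_mul, ← smul_single, map_smul, smul_comm]
  exact Submodule.smul_mem_smul (hX i j) (hφ _)

theorem exists_specialLinear_map_sub_mem {I : Ideal O} (hI : HasStableRankOne (O ⧸ I))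
    {S : Subalgebra O A} {φ : Matrix n n O →ₐ[O] A} {c : O} (hc : c - 1 ∈ I)
    (hφ : ∀ X, c • φ X ∈ S) {w : A} (hw : w ∈ S) {B : Matrix n n O} (hB : φ B = c • w)
    (hdet : B.det - 1 ∈ I) :
    ∃ g ∈ specialLinearComap S φ, φ g - w ∈ I • Subalgebra.toSubmodule S := by
  let π := Ideal.Quotient.mk I
  have hdetπ : (B.map π).det = 1 := by
    rw [← RingHom.mapMatrix_apply, ← RingHom.map_det, ← map_one π, Ideal.Quotient.eq]
    exact hdet
  obtain ⟨g, hg, hgB⟩ := exists_mem_map_eq_of_forall_transvection hI π (specialLinearComap S φ)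
    (fun i j hij t ↦ by
      obtain ⟨b, rfl⟩ := Ideal.Quotient.mk_surjective t
      refine ⟨c * b, ?_, transvection_mem_specialLinearComap hφ hij b⟩
      rw [map_mul, (Ideal.Quotient.eq.2 hc : π c = π 1), map_one, one_mul]) ⟨B.map π, hdetπ⟩
  refine ⟨g, hg, ?_⟩
  have hentry : ∀ i j, (g.1 - B) i j ∈ I := fun i j ↦
    Ideal.Quotient.eq.1 congr(($hgB).1 i j)
  have hsplit : φ g - w = c • φ (g.1 - B) + ((1 - c) • (φ g - w) + (c * (c - 1)) • w) := by
    rw [map_sub, hB]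
    module
  rw [hsplit]
  exact add_mem (smul_map_mem_ideal_smul hφ hentry) (add_mem
    (Submodule.smul_mem_smul (by simpa using I.neg_mem hc) (sub_mem hg.1 hw))
    (Submodule.smul_mem_smul (I.mul_mem_left c hc) hw))

end SingleFactor

section MatrixOrder

variable {O F m n : Type*} [CommRing O] [Field F] [Algebra O F] [Fintype m] [DecidableEq m]
  [Fintype n] [DecidableEq n]

variable (O) in
/-- The embedding of `Mat_n(O)` into `Mat_m(F)` under which a matrix acts through the basis `e` of
`F ^ m`; its image is the order of the free lattice spanned by `e`. -/
noncomputable def matrixOfBasis (e : Basis n F (m → F)) : Matrix n n O →ₐ[O] Matrix m m F :=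
  (((toLinAlgEquiv e).trans LinearMap.toMatrixAlgEquiv').toAlgHom.restrictScalars O).comp
    (Algebra.ofId O F).mapMatrix

theorem matrixOfBasis_smul_basis (e : Basis n F (m → F)) (X : Matrix n n O) (j : n) :
    matrixOfBasis O e X • e j = ∑ i, X i j • e i := by
  have := toLinAlgEquiv_self e (X.map (algebraMap O F)) j
  simp only [map_apply, algebraMap_smul] at this
  rw [← this, smul_eq_mulVec, ← toLinAlgEquiv'_apply]
  exact DFunLike.congr_fun
    (toLinAlgEquiv'_toMatrixAlgEquiv' (toLinAlgEquiv e (X.map (algebraMap O F)))) (e j)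

theorem det_matrixOfBasis (e : Basis n F (m → F)) (X : Matrix n n O) :
    (matrixOfBasis O e X).det = algebraMap O F X.det :=
  (LinearMap.det_toMatrix' _).trans <|
    (LinearMap.det_toLin e _).trans ((algebraMap O F).map_det X).symm

variable {P : Submodule O (m → F)} {e : Basis n F (m → F)} {c : O}

theorem smul_matrixOfBasis_mem_latticeStabilizer (he : ∀ i, e i ∈ P)
    (hc : ∀ p ∈ P, c • p ∈ Submodule.span O (Set.range e)) (X : Matrix n n O) :
    c • matrixOfBasis O e X ∈ latticeStabilizer (Matrix m m F) P := by
  intro p hp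
  obtain ⟨y, hy⟩ := (Submodule.mem_span_range_iff_exists_fun O).1 (hc p hp)
  rw [smul_assoc, ← smul_comm, ← hy, Finset.smul_sum]
  refine P.sum_mem fun j _ ↦ ?_
  rw [smul_comm, matrixOfBasis_smul_basis]
  exact P.smul_mem _ (P.sum_mem fun i _ ↦ P.smul_mem _ (he i))

theorem exists_matrixOfBasis_eq_smul (he : ∀ i, e i ∈ P)
    (hc : ∀ p ∈ P, c • p ∈ Submodule.span O (Set.range e)) {w : Matrix m m F}
    (hw : w ∈ latticeStabilizer (Matrix m m F) P) : ∃ B, matrixOfBasis O e B = c • w := by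
  choose y hy using fun j ↦
    (Submodule.mem_span_range_iff_exists_fun O).1 (hc _ (hw _ (he j)))
  refine ⟨of fun i j ↦ y j i, toLinAlgEquiv'.injective (e.ext fun j ↦ ?_)⟩
  simp only [toLinAlgEquiv'_apply, ← smul_eq_mulVec, matrixOfBasis_smul_basis, of_apply, hy,
    smul_assoc]

theorem det_sub_one_mem_of_matrixOfBasis_eq_smul [FaithfulSMul O F] {I : Ideal O} (hc : c - 1 ∈ I)
    {w : Matrix m m F} {B : Matrix n n O} (hB : matrixOfBasis O e B = c • w) {a : O} (ha : a ∈ I)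
    (hdet : w.det - 1 = algebraMap O F a) : B.det - 1 ∈ I := by
  have hBdet : B.det = c ^ Fintype.card m * (1 + a) := by
    apply FaithfulSMul.algebraMap_injective O F
    rw [← det_matrixOfBasis e, hB, ← algebraMap_smul F c w, det_smul, map_mul, map_pow, map_add,
      map_one, ← hdet, add_sub_cancel]
  rw [← Ideal.Quotient.eq] at hc ⊢
  rw [hBdet, map_mul, map_pow, hc, map_add, Ideal.Quotient.eq_zero_iff_mem.2 ha, map_one, one_pow,
    one_mul, add_zero]

theorem exists_specialLinear_mem_latticeStabilizer_sub_mem [IsDedekindDomain O]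
    [IsFractionRing O F] (P : Submodule O (m → F)) [Submodule.IsLattice F P] {I : Ideal O}
    (hI : I ≠ ⊥) {w : Matrix m m F} (hw : w ∈ latticeStabilizer (Matrix m m F) P) {a : O}
    (ha : a ∈ I) (hdet : w.det - 1 = algebraMap O F a) :
    ∃ v : Matrix.SpecialLinearGroup m F, v.1 ∈ latticeStabilizer (Matrix m m F) P ∧
      (v⁻¹).1 ∈ latticeStabilizer (Matrix m m F) P ∧
      v.1 - w ∈ I • Subalgebra.toSubmodule (latticeStabilizer (Matrix m m F) P) := by
  obtain rfl | hI' := eq_or_ne I ⊤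
  · refine ⟨1, one_mem _, by rw [inv_one]; exact one_mem _, ?_⟩
    rw [Submodule.top_smul]
    exact sub_mem (one_mem (latticeStabilizer (Matrix m m F) P)) hw
  have := finite_maximalSpectrum_quotient hI
  obtain ⟨k, e, c, hcI, he, hc⟩ := exists_basis_mem_smul_mem_span P hI hI'
  obtain ⟨B, hB⟩ := exists_matrixOfBasis_eq_smul he hc hw
  obtain ⟨g, ⟨hg, hg'⟩, hgw⟩ := exists_specialLinear_map_sub_mem
    (hasStableRankOne_of_finite_maximalSpectrum _) hcI
    (smul_matrixOfBasis_mem_latticeStabilizer he hc) hw hB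
    (det_sub_one_mem_of_matrixOfBasis_eq_smul hcI hB ha hdet)
  have hdetg : ∀ h : Matrix.SpecialLinearGroup (Fin k) O, (matrixOfBasis O e h.1).det = 1 :=
    fun h ↦ by rw [det_matrixOfBasis, h.det_coe, map_one]
  let v : Matrix.SpecialLinearGroup m F := ⟨_, hdetg g⟩
  have hv : v⁻¹ = ⟨_, hdetg g⁻¹⟩ := inv_eq_of_mul_eq_one_right <| Subtype.ext <|
    (map_mul (matrixOfBasis O e) g.1 g⁻¹.1).symm.trans <| by
      rw [← Matrix.SpecialLinearGroup.coe_mul, mul_inv_cancel, Matrix.SpecialLinearGroup.coe_one,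
        map_one, Matrix.SpecialLinearGroup.coe_one]
  exact ⟨v, hg, by rwa [hv], hgw⟩

end MatrixOrder

section MaximalOrder

variable {R A : Type*} [CommRing R] [Ring A] [Algebra R A]

/-- `M` is a maximal order of the `R`-algebra `A`. Only finiteness over `R` is required of the
competing orders: a finite subalgebra containing an order which spans `A` spans `A` as well. -/
abbrev IsMaximalOrder (M : Subalgebra R A) : Prop :=
  Maximal (fun N : Subalgebra R A ↦ Module.Finite R N) M

variable {M : Subalgebra R A}

theorem IsMaximalOrder.isIntegral_of_mem (hM : IsMaximalOrder M) {a : A} (ha : a ∈ M) :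
    IsIntegral R a :=
  IsIntegral.of_mem_of_fg M (Module.Finite.iff_fg.1 hM.prop) a ha

theorem IsMaximalOrder.mem_of_isIntegral_of_commute (hM : IsMaximalOrder M) {a : A}
    (ha : IsIntegral R a) (hcomm : ∀ b, Commute b a) : a ∈ M := by
  have := hM.prop
  have := Algebra.finite_adjoin_simple_of_isIntegral ha
  let f : M ⊗[R] Algebra.adjoin R {a} →ₐ[R] A :=
    Algebra.TensorProduct.lift M.val (Algebra.adjoin R {a}).val fun b c ↦
      Algebra.commute_of_mem_adjoin_singleton_of_commute c.2 (hcomm b)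
  refine hM.le_of_ge (y := f.range) (Module.Finite.range f.toLinearMap) (fun b hb ↦ ?_) ?_
  · exact ⟨⟨b, hb⟩ ⊗ₜ 1, by simp [f]⟩
  · exact ⟨1 ⊗ₜ ⟨a, Algebra.self_mem_adjoin_singleton R a⟩, by simp [f]⟩

section CentralExtension

variable {O : Type*} [CommRing O] [Algebra R O] [Algebra.IsIntegral R O] [Algebra O A]
  [IsScalarTower R O A]

theorem IsMaximalOrder.algebraMap_mem_of_isIntegral (hM : IsMaximalOrder M) (x : O) :
    algebraMap O A x ∈ M :=
  hM.mem_of_isIntegral_of_commute ((Algebra.IsIntegral.isIntegral x).algebraMap) fun b ↦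
    Algebra.commute_algebraMap_right x b

theorem IsMaximalOrder.finite_of_isIntegral [IsNoetherianRing R] [FaithfulSMul O A]
    (hM : IsMaximalOrder M) : Module.Finite R O := by
  have := hM.prop
  refine Module.Finite.of_injective
    ((IsScalarTower.toAlgHom R O A).codRestrict M hM.algebraMap_mem_of_isIntegral).toLinearMap
    fun x y hxy ↦ FaithfulSMul.algebraMap_injective O A congr(($hxy).1)

theorem IsMaximalOrder.exists_restrictScalars_eq [Module.Finite R O] (hM : IsMaximalOrder M) :
    ∃ N : Subalgebra O A, IsMaximalOrder N ∧ N.restrictScalars R = M := by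
  let N : Subalgebra O A := { M with algebraMap_mem' := hM.algebraMap_mem_of_isIntegral }
  have : Module.Finite R N := hM.prop
  refine ⟨N, ⟨Module.Finite.of_restrictScalars_finite R O N, fun N' hN' hle ↦ ?_⟩, rfl⟩
  have : IsScalarTower R O N' := Submodule.isScalarTower' (Subalgebra.toSubmodule N')
  have hfinite : Module.Finite R N' := Module.Finite.trans O N'
  exact hM.le_of_ge (y := N'.restrictScalars R) hfinite hle

end CentralExtension

theorem finite_latticeStabilizer [IsNoetherianRing R] {V : Type*} [AddCommGroup V] [Module R V]
    [Module A V] [IsScalarTower R A V] (P : Submodule R V) [Module.Finite R P]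
    (hP : ∀ a : A, (∀ p ∈ P, a • p = 0) → a = 0) : Module.Finite R (latticeStabilizer A P) := by
  let f : latticeStabilizer A P →ₗ[R] P →ₗ[R] P :=
    { toFun a := (Algebra.lsmul R R V a.1).restrict a.2
      map_add' a b := LinearMap.ext fun p ↦ Subtype.ext (add_smul a.1 b.1 p.1)
      map_smul' r a := LinearMap.ext fun p ↦ Subtype.ext (smul_assoc r a.1 p.1) }
  refine Module.Finite.of_injective f ((injective_iff_map_eq_zero f).2 fun a ha ↦ ?_)
  exact Subtype.ext <| hP _ fun p hp ↦ congr(($ha ⟨p, hp⟩).1)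

theorem IsMaximalOrder.exists_latticeStabilizer_eq {O F m : Type*} [CommRing O]
    [IsNoetherianRing O] [Field F] [Algebra O F] [Fintype m] [DecidableEq m]
    {N : Subalgebra O (Matrix m m F)} (hN : IsMaximalOrder N) :
    ∃ P : Submodule O (m → F), Submodule.IsLattice F P ∧
      latticeStabilizer (Matrix m m F) P = N := by
  have := hN.prop
  let P : Submodule O (m → F) := ⨆ j, (Subalgebra.toSubmodule N).map
    ((Algebra.lsmul O O (m → F)).toLinearMap.flip (Pi.single j 1))
  have hsingle : ∀ j, Pi.single j 1 ∈ P := fun j ↦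
    Submodule.mem_iSup_of_mem j ⟨1, one_mem N, one_mulVec _⟩
  have hP : Submodule.IsLattice F P :=
    { fg := Submodule.fg_iSup _ fun j ↦ (Module.Finite.iff_fg.1 hN.prop).map _
      span_eq_top := by
        rw [← top_le_iff, ← (Pi.basisFun F m).span_eq]
        refine Submodule.span_mono (Set.range_subset_iff.2 fun j ↦ ?_)
        rw [Pi.basisFun_apply]
        exact hsingle j }
  have := Submodule.IsLattice.finite F P
  have hfinite : Module.Finite O (latticeStabilizer (Matrix m m F) P) :=
    finite_latticeStabilizer P fun a ha ↦ ext_of_mulVec_single fun j ↦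
      (ha _ (hsingle j)).trans (zero_mulVec _).symm
  refine ⟨P, hP, (hN.eq_of_le hfinite fun a ha p hp ↦ ?_).symm⟩
  have hle : P ≤ P.comap (Algebra.lsmul O O (m → F) a) := by
    refine iSup_le fun j ↦ Submodule.map_le_iff_le_comap.2 fun b hb ↦ ?_
    exact Submodule.mem_iSup_of_mem j ⟨a * b, N.mul_mem ha hb, (mulVec_mulVec _ a b).symm⟩
  exact hle hp

end MaximalOrder

section IntegralClosure

theorem isDedekindDomain_integralClosure_of_finite (R K F : Type*) [CommRing R] [IsDomain R]
    [IsNoetherianRing R] [Ring.DimensionLEOne R] [Field K] [Algebra R K] [IsFractionRing R K]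
    [Field F] [Algebra K F] [FiniteDimensional K F] [Algebra R F] [IsScalarTower R K F]
    [Module.Finite R (integralClosure R F)] : IsDedekindDomain (integralClosure R F) := by
  have := IsNoetherianRing.of_finite R (integralClosure R F)
  have := integralClosure.isIntegrallyClosedOfFiniteExtension (R := R) K (L := F)
  exact { }

theorem IsMaximalOrder.exists_specialLinear_sub_mem {R F m : Type*} (K : Type*) [CommRing R]
    [IsDomain R] [IsNoetherianRing R] [Ring.DimensionLEOne R] [Field K] [Algebra R K]
    [IsFractionRing R K] [Field F] [Algebra K F] [FiniteDimensional K F] [Algebra R F]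
    [IsScalarTower R K F] [Fintype m] [DecidableEq m] [Nonempty m]
    {M : Subalgebra R (Matrix m m F)} (hM : IsMaximalOrder M) {J : Ideal (integralClosure R F)}
    (hJ : J ≠ ⊥) {w : Matrix m m F} (hw : w ∈ M) {a : integralClosure R F} (ha : a ∈ J)
    (hdet : w.det - 1 = a) :
    ∃ v : Matrix.SpecialLinearGroup m F, v.1 ∈ M ∧ (v⁻¹).1 ∈ M ∧
      v.1 - w ∈ Submodule.span R (Set.image2 (· • ·) (J : Set (integralClosure R F)) M) := by
  have : Module.Finite R (integralClosure R F) := hM.finite_of_isIntegral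
  have : IsFractionRing (integralClosure R F) F :=
    integralClosure.isFractionRing_of_finite_extension K F
  have := isDedekindDomain_integralClosure_of_finite R K F
  obtain ⟨N, hN, rfl⟩ := hM.exists_restrictScalars_eq (O := integralClosure R F)
  obtain ⟨P, hP, rfl⟩ := hN.exists_latticeStabilizer_eq
  obtain ⟨v, hv, hv', hvw⟩ := exists_specialLinear_mem_latticeStabilizer_sub_mem P hJ hw ha hdet
  exact ⟨v, hv, hv', Submodule.smul_induction_on hvw
    (fun b hb x hx ↦ Submodule.subset_span ⟨b, hb, x, hx, rfl⟩) fun _ _ ↦ add_mem⟩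

end IntegralClosure

section Pi

theorem finite_subalgebraMap {R A B : Type*} [CommRing R] [Ring A] [Algebra R A] [Ring B]
    [Algebra R B] {M : Subalgebra R A} (hM : Module.Finite R M) (f : A →ₐ[R] B) :
    Module.Finite R (M.map f) :=
  have : Module.Finite R (Subalgebra.toSubmodule M) := hM
  Module.Finite.map (Subalgebra.toSubmodule M) f.toLinearMap

variable {R ι : Type*} [CommRing R]

section Components

variable {A : ι → Type*} [Finite ι] [∀ i, Ring (A i)] [∀ i, Algebra R (A i)]
  {M : Subalgebra R (∀ i, A i)}

theorem finite_subalgebraPi {N : ∀ i, Subalgebra R (A i)} (hN : ∀ i, Module.Finite R (N i)) :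
    Module.Finite R (Subalgebra.pi Set.univ N) :=
  Module.Finite.iff_fg.2 (Submodule.fg_pi fun i ↦ Module.Finite.iff_fg.1 (hN i))

theorem IsMaximalOrder.pi_map_eval (hM : IsMaximalOrder M) :
    Subalgebra.pi Set.univ (fun i ↦ M.map (Pi.evalAlgHom R A i)) = M :=
  (hM.eq_of_le (finite_subalgebraPi fun _ ↦ finite_subalgebraMap hM.prop _)
    fun x hx _ _ ↦ Subalgebra.mem_map.2 ⟨x, hx, rfl⟩).symm

theorem IsMaximalOrder.mem_iff_forall_mem_map_eval (hM : IsMaximalOrder M) {x : ∀ i, A i} :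
    x ∈ M ↔ ∀ i, x i ∈ M.map (Pi.evalAlgHom R A i) := by
  conv_lhs => rw [← hM.pi_map_eval]
  simp [Subalgebra.mem_pi]

theorem IsMaximalOrder.single_mem [DecidableEq ι] (hM : IsMaximalOrder M) {i : ι} {x : A i}
    (hx : x ∈ M.map (Pi.evalAlgHom R A i)) : Pi.single i x ∈ M := by
  refine hM.mem_iff_forall_mem_map_eval.2 fun j ↦ ?_
  obtain rfl | hj := eq_or_ne j i
  · rwa [Pi.single_eq_same]
  · rw [Pi.single_eq_of_ne hj]
    exact zero_mem _

theorem IsMaximalOrder.map_eval (hM : IsMaximalOrder M) (i : ι) :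
    IsMaximalOrder (M.map (Pi.evalAlgHom R A i)) := by
  classical
  refine ⟨finite_subalgebraMap hM.prop _, fun N hN hle x hx ↦ ?_⟩
  let N' := Function.update (fun j ↦ M.map (Pi.evalAlgHom R A j)) i N
  have hN' : Module.Finite R (Subalgebra.pi Set.univ N') := finite_subalgebraPi <|
    (Function.forall_update_iff _ fun j (B : Subalgebra R (A j)) ↦ Module.Finite R B).2
      ⟨hN, fun j _ ↦ finite_subalgebraMap hM.prop _⟩
  have hmem {y : ∀ j, A j} : y ∈ Subalgebra.pi Set.univ N' ↔
      y i ∈ N ∧ ∀ j ≠ i, y j ∈ M.map (Pi.evalAlgHom R A j) :=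
    Subalgebra.mem_pi.trans <| (forall_congr' fun _ ↦ by simp [N']).trans <|
      Function.forall_update_iff _ fun j (B : Subalgebra R (A j)) ↦ y j ∈ B
  have hM' : M ≤ Subalgebra.pi Set.univ N' := fun y hy ↦
    have hy := hM.mem_iff_forall_mem_map_eval.1 hy
    hmem.2 ⟨hle (hy i), fun j _ ↦ hy j⟩
  have hx' : Pi.single i x ∈ Subalgebra.pi Set.univ N' := hmem.2
    ⟨by simpa using hx, fun j hj ↦ by simp [hj, zero_mem]⟩
  exact ⟨_, hM.le_of_ge hN' hM' hx', Pi.single_eq_same i x⟩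

end Components

section ComponentIdeal

variable {F : ι → Type*} [∀ i, Field (F i)] [∀ i, Algebra R (F i)] [DecidableEq ι]
  {𝔤 : Submodule R (∀ i, F i)}

theorem isIntegral_single (i : ι) {c : F i} (hc : IsIntegral R c) (j : ι) :
    IsIntegral R ((Pi.single i c : ∀ i, F i) j) := by
  obtain rfl | hj := eq_or_ne j i
  · rwa [Pi.single_eq_same]
  · rw [Pi.single_eq_of_ne hj]
    exact isIntegral_zero

/-- The component at `i` of an ideal `𝔤` of the order `∏ O_i`, where `O_i` is the integral closure
of `R` in `F_i`; ideals of such a product are products of ideals. -/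
def componentIdeal (h𝔤 : ∀ c : ∀ i, F i, (∀ i, IsIntegral R (c i)) → ∀ g ∈ 𝔤, c * g ∈ 𝔤) (i : ι) :
    Ideal (integralClosure R (F i)) where
  carrier := {a | Pi.single i a.1 ∈ 𝔤}
  zero_mem' := by simp [zero_mem]
  add_mem' ha hb := by
    rw [Set.mem_ofPred_eq, Subalgebra.coe_add, Pi.single_add]
    exact add_mem ha hb
  smul_mem' c a ha := by
    rw [Set.mem_ofPred_eq, smul_eq_mul, Subalgebra.coe_mul, Pi.single_mul]
    exact h𝔤 _ (isIntegral_single i c.2) _ ha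

variable {h𝔤 : ∀ c : ∀ i, F i, (∀ i, IsIntegral R (c i)) → ∀ g ∈ 𝔤, c * g ∈ 𝔤}

theorem mem_componentIdeal_of_mem {g : ∀ i, F i} (hg : g ∈ 𝔤) {i : ι} (hi : IsIntegral R (g i)) :
    ⟨g i, hi⟩ ∈ componentIdeal h𝔤 i := by
  have := h𝔤 _ (isIntegral_single i isIntegral_one) g hg
  rwa [← Pi.single_mul_left, one_mul] at this

theorem componentIdeal_ne_bot {K : Type*} [Field K] [∀ i, Algebra K (F i)]
    (hfull : Submodule.span K (𝔤 : Set (∀ i, F i)) = ⊤)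
    (hint : ∀ g ∈ 𝔤, ∀ i, IsIntegral R (g i)) (i : ι) : componentIdeal h𝔤 i ≠ ⊥ := by
  intro hbot
  have hle : Submodule.span K (𝔤 : Set (∀ i, F i)) ≤ LinearMap.ker (LinearMap.proj (R := K) i) :=
    Submodule.span_le.2 fun g hg ↦ by
      have := mem_componentIdeal_of_mem (h𝔤 := h𝔤) hg (hint g hg i)
      rw [hbot] at this
      exact congr(($this).1)
  exact one_ne_zero (hle (hfull ▸ trivial : (1 : ∀ i, F i) ∈ _))

end ComponentIdeal

section Matrices

variable {F m : ι → Type*} [Finite ι] [∀ i, Field (F i)] [∀ i, Algebra R (F i)] [∀ i, Fintype (m i)]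
  [∀ i, DecidableEq (m i)]

/-- The embedding of the centre `∏ F_i` into `∏ Mat_{m_i}(F_i)` by scalar matrices. -/
abbrev scalarPi (c : ∀ i, F i) : ∀ i, Matrix (m i) (m i) (F i) :=
  fun i ↦ Matrix.scalar (m i) (c i)

/-- The two-sided ideal `𝔤M` of an order `M` in `∏ Mat_{m_i}(F_i)` generated by an ideal `𝔤` of its
centre. -/
abbrev centralMul (𝔤 : Submodule R (∀ i, F i)) (M : Subalgebra R (∀ i, Matrix (m i) (m i) (F i))) :
    Submodule R (∀ i, Matrix (m i) (m i) (F i)) :=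
  Submodule.span R (Set.image2 (fun g x ↦ scalarPi g * x) (𝔤 : Set (∀ i, F i))
    (M : Set (∀ i, Matrix (m i) (m i) (F i))))

variable {M : Subalgebra R (∀ i, Matrix (m i) (m i) (F i))}

theorem IsMaximalOrder.scalarPi_mem_iff [∀ i, Nonempty (m i)] (hM : IsMaximalOrder M)
    {c : ∀ i, F i} : scalarPi c ∈ M ↔ ∀ i, IsIntegral R (c i) := by
  refine hM.mem_iff_forall_mem_map_eval.trans (forall_congr' fun i ↦ ⟨fun h ↦ ?_, fun h ↦ ?_⟩)
  · exact (isIntegral_algebraMap_iff (FaithfulSMul.algebraMap_injective (F i)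
      (Matrix (m i) (m i) (F i)))).1 ((hM.map_eval i).isIntegral_of_mem h)
  · exact (hM.map_eval i).algebraMap_mem_of_isIntegral (⟨c i, h⟩ : integralClosure R (F i))

theorem IsMaximalOrder.single_mem_centralMul [DecidableEq ι] (hM : IsMaximalOrder M)
    {𝔤 : Submodule R (∀ i, F i)}
    {h𝔤 : ∀ c : ∀ i, F i, (∀ i, IsIntegral R (c i)) → ∀ g ∈ 𝔤, c * g ∈ 𝔤} {i : ι}
    {x : Matrix (m i) (m i) (F i)} (hx : x ∈ Submodule.span R (Set.image2 (· • ·)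
      (componentIdeal h𝔤 i : Set (integralClosure R (F i))) (M.map (Pi.evalAlgHom R _ i)))) :
    Pi.single i x ∈ centralMul 𝔤 M := by
  refine (Submodule.span_le.2 ?_ : _ ≤ (centralMul 𝔤 M).comap (LinearMap.single R _ i)) hx
  rintro _ ⟨a, ha, y, hy, rfl⟩
  refine Submodule.subset_span ⟨Pi.single i a.1, ha, Pi.single i y, hM.single_mem hy, ?_⟩
  have hscalar : scalarPi (Pi.single i a.1) =
      (Pi.single i (Matrix.scalar (m i) a.1) : ∀ i, Matrix (m i) (m i) (F i)) :=
    funext fun j ↦ Pi.apply_single (fun j ↦ Matrix.scalar (m j)) (fun j ↦ map_zero _) i a.1 j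
  dsimp only
  rw [hscalar, ← Pi.single_mul, scalar_apply, ← smul_eq_diagonal_mul]
  rfl

end Matrices

end Pi

theorem stmt_12_general {R K ι : Type*} [CommRing R] [IsDomain R] [IsNoetherianRing R]
    [Ring.DimensionLEOne R] [Field K] [Algebra R K] [IsFractionRing R K] [Finite ι]
    {F m : ι → Type*} [∀ i, Field (F i)] [∀ i, Algebra K (F i)] [∀ i, FiniteDimensional K (F i)]
    [∀ i, Algebra R (F i)] [∀ i, IsScalarTower R K (F i)] [∀ i, Fintype (m i)]
    [∀ i, DecidableEq (m i)] [∀ i, Nonempty (m i)]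
    {M : Subalgebra R (∀ i, Matrix (m i) (m i) (F i))} (hM : IsMaximalOrder M)
    {𝔤 : Submodule R (∀ i, F i)} (h𝔤M : ∀ g ∈ 𝔤, scalarPi g ∈ M)
    (h𝔤ideal : ∀ c : ∀ i, F i, scalarPi c ∈ M → ∀ g ∈ 𝔤, c * g ∈ 𝔤)
    (h𝔤full : Submodule.span K (𝔤 : Set (∀ i, F i)) = ⊤)
    {w : ∀ i, Matrix (m i) (m i) (F i)} (hw : w ∈ M) (hdet : (fun i ↦ (w i).det) - 1 ∈ 𝔤) :
    ∃ v : (∀ i, Matrix (m i) (m i) (F i))ˣ, v.1 ∈ M ∧ (v⁻¹).1 ∈ M ∧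
      (fun i ↦ (v.1 i).det) = 1 ∧ v.1 - w ∈ centralMul 𝔤 M := by
  classical
  cases nonempty_fintype ι
  have hint := fun g hg ↦ hM.scalarPi_mem_iff.1 (h𝔤M g hg)
  have hideal := fun c hc ↦ h𝔤ideal c (hM.scalarPi_mem_iff.2 hc)
  choose v hv hv' hvw using fun i ↦ (hM.map_eval i).exists_specialLinear_sub_mem K
    (componentIdeal_ne_bot (h𝔤 := hideal) h𝔤full hint i) (hM.mem_iff_forall_mem_map_eval.1 hw i)
    (mem_componentIdeal_of_mem hdet (hint _ hdet i)) rfl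
  refine ⟨MulEquiv.piUnits.symm fun i ↦ Matrix.SpecialLinearGroup.toGL (v i),
    hM.mem_iff_forall_mem_map_eval.2 hv, hM.mem_iff_forall_mem_map_eval.2 hv',
    funext fun i ↦ (v i).det_coe, ?_⟩
  rw [← Finset.univ_sum_single (_ - w)]
  exact sum_mem fun i _ ↦ hM.single_mem_centralMul (hvw i)

/-- For a product of matrix algebras over `𝓞 K`, instance search finds the left-hand structure,
which is not definitionally the componentwise one. -/
theorem ringOfIntegers_instAlgebra_pi_matrix (K : Type*) [Field K] {ι : Type*} (F m : ι → Type*)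
    [∀ i, Field (F i)] [∀ i, Algebra K (F i)] [∀ i, Algebra (𝓞 K) (F i)]
    [∀ i, IsScalarTower (𝓞 K) K (F i)] [∀ i, Fintype (m i)] [∀ i, DecidableEq (m i)] :
    RingOfIntegers.instAlgebra (K := K) (L := ∀ i, Matrix (m i) (m i) (F i)) =
      @Pi.algebra ι (𝓞 K) _ _ (fun _ ↦ Matrix.semiring) fun _ ↦ Matrix.instAlgebra :=
  Algebra.algebra_ext _ _ fun a ↦ funext fun i ↦
    congrArg (scalar (m i)) (IsScalarTower.algebraMap_apply (𝓞 K) K (F i) a).symm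

/-- Let `K` be a number field, `A = ∏_{i=1}^r Mat_{n_i}(K_i)` with the `K_i` finite field
extensions of `K`, `M` a maximal `O_K`-order in `A`, `O_C = M ∩ C` (the centre `C = ∏ K_i`
embedded diagonally via scalar matrices), and let `𝔤` be a proper full ideal of `O_C`.
Then the canonical map `f₁ : SL(M) → SL(M/𝔤M)` is surjective:  every element `w` of `M`
that is invertible modulo `𝔤M` and has reduced norm (componentwise determinant)
congruent to `1` modulo `𝔤` is congruent modulo `𝔤M` to a unit `v` of `M` with
reduced norm exactly `1`. -/
theorem stmt_12 {K : Type*} [Field K] [NumberField K]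
    {r : ℕ} (hr : 0 < r) (n : Fin r → ℕ) (hn : ∀ i, 0 < n i)
    (Kf : Fin r → Type*) [∀ i, Field (Kf i)] [∀ i, Algebra K (Kf i)]
    [∀ i, FiniteDimensional K (Kf i)]
    [∀ i, Algebra (𝓞 K) (Kf i)] [∀ i, IsScalarTower (𝓞 K) K (Kf i)]
    (M : Subalgebra (𝓞 K) (∀ i, Matrix (Fin (n i)) (Fin (n i)) (Kf i)))
    (hMfg : Module.Finite (𝓞 K) M)
    (hMfull : Submodule.span K (M : Set (∀ i, Matrix (Fin (n i)) (Fin (n i)) (Kf i))) = ⊤)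
    (hMmax : ∀ M' : Subalgebra (𝓞 K) (∀ i, Matrix (Fin (n i)) (Fin (n i)) (Kf i)),
      Module.Finite (𝓞 K) M' →
      Submodule.span K (M' : Set (∀ i, Matrix (Fin (n i)) (Fin (n i)) (Kf i))) = ⊤ →
      M ≤ M' → M' = M)
    (𝔤 : Submodule (𝓞 K) (∀ i, Kf i))
    -- `𝔤 ⊆ O_C = M ∩ C`
    (h𝔤OC : ∀ g ∈ 𝔤, (fun i => Matrix.scalar (Fin (n i)) (g i)) ∈ M)
    -- `𝔤` is an ideal of `O_C`
    (h𝔤ideal : ∀ c : ∀ i, Kf i, (fun i => Matrix.scalar (Fin (n i)) (c i)) ∈ M →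
      ∀ g ∈ 𝔤, c * g ∈ 𝔤)
    -- `𝔤` is proper
    (h𝔤proper : (1 : ∀ i, Kf i) ∉ 𝔤)
    -- `𝔤` is full
    (h𝔤full : Submodule.span K (𝔤 : Set (∀ i, Kf i)) = ⊤) :
    ∀ w : ∀ i, Matrix (Fin (n i)) (Fin (n i)) (Kf i), w ∈ M →
      -- `w` is invertible modulo `𝔤M`
      (∃ w' ∈ M,
        w * w' - 1 ∈ Submodule.span (𝓞 K) (Set.image2
          (fun (g : ∀ i, Kf i) (m : ∀ i, Matrix (Fin (n i)) (Fin (n i)) (Kf i)) =>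
            (fun i => Matrix.scalar (Fin (n i)) (g i)) * m)
          (𝔤 : Set (∀ i, Kf i)) (M : Set (∀ i, Matrix (Fin (n i)) (Fin (n i)) (Kf i)))) ∧
        w' * w - 1 ∈ Submodule.span (𝓞 K) (Set.image2
          (fun (g : ∀ i, Kf i) (m : ∀ i, Matrix (Fin (n i)) (Fin (n i)) (Kf i)) =>
            (fun i => Matrix.scalar (Fin (n i)) (g i)) * m)
          (𝔤 : Set (∀ i, Kf i)) (M : Set (∀ i, Matrix (Fin (n i)) (Fin (n i)) (Kf i))))) →
      -- `nr w ≡ 1 (mod 𝔤)`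
      ((fun i => (w i).det) - 1 ∈ 𝔤) →
      -- there is a lift `v ∈ SL(M)` of `w̄`
      ∃ v : (∀ i, Matrix (Fin (n i)) (Fin (n i)) (Kf i))ˣ,
        (v : ∀ i, Matrix (Fin (n i)) (Fin (n i)) (Kf i)) ∈ M ∧
        ((v⁻¹ : (∀ i, Matrix (Fin (n i)) (Fin (n i)) (Kf i))ˣ) :
          ∀ i, Matrix (Fin (n i)) (Fin (n i)) (Kf i)) ∈ M ∧
        (fun i => ((v : ∀ i, Matrix (Fin (n i)) (Fin (n i)) (Kf i)) i).det) = 1 ∧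
        (v : ∀ i, Matrix (Fin (n i)) (Fin (n i)) (Kf i)) - w ∈
          Submodule.span (𝓞 K) (Set.image2
            (fun (g : ∀ i, Kf i) (m : ∀ i, Matrix (Fin (n i)) (Fin (n i)) (Kf i)) =>
              (fun i => Matrix.scalar (Fin (n i)) (g i)) * m)
            (𝔤 : Set (∀ i, Kf i)) (M : Set (∀ i, Matrix (Fin (n i)) (Fin (n i)) (Kf i)))) := by
  rintro w hw - hdet
  have : ∀ i, Nonempty (Fin (n i)) := fun i ↦ Fin.pos_iff_nonempty.1 (hn i)
  have hM : IsMaximalOrder M := ⟨hMfg, fun M' hM' hle ↦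
    (hMmax M' hM' (top_le_iff.1 (hMfull ▸ Submodule.span_mono hle)) hle).le⟩
  clear hMfg hMfull hMmax
  revert M
  rw [ringOfIntegers_instAlgebra_pi_matrix]
  intro M h𝔤OC h𝔤ideal hw hM
  exact stmt_12_general hM h𝔤OC h𝔤ideal h𝔤full hw hdet
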